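/- Let F be a field with char F ≠ 2 and char F ≠ 3. The 7-dimensional F-algebra M₇(F), defined on the basis e₁,…,e₇ by the given anticommutative multiplication table, is a Malcev algebra: it satisfies x·x = 0 for all x and the Malcev identity J(x,y,xz) = J(x,y,z)·x for all x, y, z, where J(x,y,z) = (xy)z + (yz)x + (zx)y. -/

import Mathlib

open TensorProduct

/-- Multiplication of the 7-dimensional simple non-Lie Malcev algebra `M₇(F)`,
realised on `Fin 7 → F`; the index `t` corresponds to the basis element `e_{t+1}`. -/
def m7mul {F : Type*} [Field F] (a b : Fin 7 → F) : Fin 7 → F :=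
  ![(a 1 * b 4 - a 4 * b 1) + (a 2 * b 5 - a 5 * b 2) + (a 3 * b 6 - a 6 * b 3),
    2 * (a 0 * b 1 - a 1 * b 0) - 2 * (a 5 * b 6 - a 6 * b 5),
    2 * (a 0 * b 2 - a 2 * b 0) + 2 * (a 4 * b 6 - a 6 * b 4),
    2 * (a 0 * b 3 - a 3 * b 0) - 2 * (a 4 * b 5 - a 5 * b 4),
    -2 * (a 0 * b 4 - a 4 * b 0) + 2 * (a 2 * b 3 - a 3 * b 2),
    -2 * (a 0 * b 5 - a 5 * b 0) - 2 * (a 1 * b 3 - a 3 * b 1),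
    -2 * (a 0 * b 6 - a 6 * b 0) + 2 * (a 1 * b 2 - a 2 * b 1)]

/-- Multiplication of the 7-dimensional Malcev algebra `𝕄₇(γ)` coming from the
division Cayley–Dickson algebra, realised on `Fin 7 → F`; the indices
`0,…,6` correspond to the basis `i, j, k, v, vi, vj, vk`. -/
def mGammaMul {F : Type*} [Field F] (γ : F) (a b : Fin 7 → F) : Fin 7 → F :=
  ![2 * (a 1 * b 2 - a 2 * b 1) + 2 * γ * (a 3 * b 4 - a 4 * b 3)
      + 2 * γ * (a 5 * b 6 - a 6 * b 5),
    -2 * (a 0 * b 2 - a 2 * b 0) + 2 * γ * (a 3 * b 5 - a 5 * b 3)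
      - 2 * γ * (a 4 * b 6 - a 6 * b 4),
    2 * (a 0 * b 1 - a 1 * b 0) + 2 * γ * (a 3 * b 6 - a 6 * b 3)
      + 2 * γ * (a 4 * b 5 - a 5 * b 4),
    2 * (a 0 * b 4 - a 4 * b 0) + 2 * (a 1 * b 5 - a 5 * b 1)
      + 2 * (a 2 * b 6 - a 6 * b 2),
    -2 * (a 0 * b 3 - a 3 * b 0) - 2 * (a 1 * b 6 - a 6 * b 1)
      + 2 * (a 2 * b 5 - a 5 * b 2),
    2 * (a 0 * b 6 - a 6 * b 0) - 2 * (a 1 * b 3 - a 3 * b 1)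
      - 2 * (a 2 * b 4 - a 4 * b 2),
    -2 * (a 0 * b 5 - a 5 * b 0) + 2 * (a 1 * b 4 - a 4 * b 1)
      - 2 * (a 2 * b 3 - a 3 * b 2)]

/-- The Jacobian `J(x,y,z) = (xy)z + (yz)x + (zx)y` of a multiplication. -/
def malJac {A : Type*} [Add A] (mul : A → A → A) (x y z : A) : A :=
  mul (mul x y) z + mul (mul y z) x + mul (mul z x) y

/-- `mul` is a Malcev multiplication: `x·x = 0` and `J(x,y,xz) = J(x,y,z)·x`. -/
def IsMalcevFun {A : Type*} [AddCommGroup A] (mul : A → A → A) : Prop :=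
  (∀ x, mul x x = 0) ∧
    ∀ x y z, malJac mul x y (mul x z) = mul (malJac mul x y z) x

/-- `e 0, …, e 6` is a copy of the standard basis `e₁, …, e₇` of `M₇(F)`:
linearly independent elements multiplying according to the `M₇(F)` table. -/
def IsM7Copy {F M : Type*} [Field F] [AddCommGroup M] [Module F M]
    (mul : M →ₗ[F] M →ₗ[F] M) (e : Fin 7 → M) : Prop :=
  LinearIndependent F e ∧
  (∀ s t : Fin 7, mul (e s) (e t) = - mul (e t) (e s)) ∧
  mul (e 0) (e 1) = (2 : F) • e 1 ∧
  mul (e 0) (e 2) = (2 : F) • e 2 ∧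
  mul (e 0) (e 3) = (2 : F) • e 3 ∧
  mul (e 0) (e 4) = (-2 : F) • e 4 ∧
  mul (e 0) (e 5) = (-2 : F) • e 5 ∧
  mul (e 0) (e 6) = (-2 : F) • e 6 ∧
  mul (e 1) (e 2) = (2 : F) • e 6 ∧
  mul (e 1) (e 3) = (-2 : F) • e 5 ∧
  mul (e 1) (e 4) = e 0 ∧
  mul (e 1) (e 5) = 0 ∧
  mul (e 1) (e 6) = 0 ∧
  mul (e 2) (e 3) = (2 : F) • e 4 ∧
  mul (e 2) (e 4) = 0 ∧
  mul (e 2) (e 5) = e 0 ∧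
  mul (e 2) (e 6) = 0 ∧
  mul (e 3) (e 4) = 0 ∧
  mul (e 3) (e 5) = 0 ∧
  mul (e 3) (e 6) = e 0 ∧
  mul (e 4) (e 5) = (-2 : F) • e 3 ∧
  mul (e 4) (e 6) = (2 : F) • e 2 ∧
  mul (e 5) (e 6) = (-2 : F) • e 1

/-- `e 0, …, e 6` is a copy of the basis `i, j, k, v, vi, vj, vk` of `𝕄₇(γ)`:
linearly independent elements multiplying according to the `𝕄₇(γ)` table. -/
def IsMGammaCopy {F M : Type*} [Field F] [AddCommGroup M] [Module F M]
    (γ : F) (mul : M →ₗ[F] M →ₗ[F] M) (e : Fin 7 → M) : Prop :=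
  LinearIndependent F e ∧
  (∀ s t : Fin 7, mul (e s) (e t) = - mul (e t) (e s)) ∧
  mul (e 0) (e 1) = (2 : F) • e 2 ∧
  mul (e 0) (e 2) = (-2 : F) • e 1 ∧
  mul (e 0) (e 3) = (-2 : F) • e 4 ∧
  mul (e 0) (e 4) = (2 : F) • e 3 ∧
  mul (e 0) (e 5) = (-2 : F) • e 6 ∧
  mul (e 0) (e 6) = (2 : F) • e 5 ∧
  mul (e 1) (e 2) = (2 : F) • e 0 ∧
  mul (e 1) (e 3) = (-2 : F) • e 5 ∧
  mul (e 1) (e 4) = (2 : F) • e 6 ∧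
  mul (e 1) (e 5) = (2 : F) • e 3 ∧
  mul (e 1) (e 6) = (-2 : F) • e 4 ∧
  mul (e 2) (e 3) = (-2 : F) • e 6 ∧
  mul (e 2) (e 4) = (-2 : F) • e 5 ∧
  mul (e 2) (e 5) = (2 : F) • e 4 ∧
  mul (e 2) (e 6) = (2 : F) • e 3 ∧
  mul (e 3) (e 4) = (2 * γ) • e 0 ∧
  mul (e 3) (e 5) = (2 * γ) • e 1 ∧
  mul (e 3) (e 6) = (2 * γ) • e 2 ∧
  mul (e 4) (e 5) = (2 * γ) • e 2 ∧
  mul (e 4) (e 6) = (-(2 * γ)) • e 1 ∧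
  mul (e 5) (e 6) = (2 * γ) • e 0

/-- The multiplication of the split null extension `E = M ⊕ V` of a Malcev
algebra `M` by a module `V` with representation `ρ`:
`(x + v)(y + w) = xy + (ρ_y v − ρ_x w)`. -/
def sneFun {F M V : Type*} [Field F] [AddCommGroup M] [Module F M]
    [AddCommGroup V] [Module F V]
    (mul : M → M → M) (ρ : M →ₗ[F] Module.End F V) (p q : M × V) : M × V :=
  (mul p.1 q.1, ρ q.1 p.2 - ρ p.1 q.2)

/-- The function `{x,y,z} = (xy)z − (xz)y + 2x(yz)`. -/
def trip (F : Type*) {A : Type*} [Field F] [AddCommGroup A] [Module F A]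
    (mul : A → A → A) (x y z : A) : A :=
  mul (mul x y) z - mul (mul x z) y + (2 : F) • mul x (mul y z)

/-- The function `h(y,z,t,x,u) = {yz,t,u}x + {yz,t,x}u + {yx,z,u}t + {yu,z,x}t`. -/
def hfun (F : Type*) {A : Type*} [Field F] [AddCommGroup A] [Module F A]
    (mul : A → A → A) (y z t x u : A) : A :=
  mul (trip F mul (mul y z) t u) x + mul (trip F mul (mul y z) t x) u
    + mul (trip F mul (mul y x) z u) t + mul (trip F mul (mul y u) z x) t

/-- The function `p(x,y,z,t) = −{zt,x,y} − {yt,z,x} + {xt,y,z}`. -/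
def pfun (F : Type*) {A : Type*} [Field F] [AddCommGroup A] [Module F A]
    (mul : A → A → A) (x y z t : A) : A :=
  - trip F mul (mul z t) x y - trip F mul (mul y t) z x + trip F mul (mul x t) y z

/-- `α` belongs to the centroid `Γ(M)`: `(xα)y = (xy)α = x(yα)` for all `x, y`. -/
def IsCentroidElem {F M : Type*} [Field F] [AddCommGroup M] [Module F M]
    (mul : M →ₗ[F] M →ₗ[F] M) (α : M →ₗ[F] M) : Prop :=
  ∀ x y : M, mul (α x) y = α (mul x y) ∧ mul x (α y) = α (mul x y)

/-!
The commutator algebra of an alternative ring is Malcev: its Jacobian `J(x, y, z)` is six times the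
associator `(x, y, z)`, and the Moufang-type identities `(x, y, xz) = (x, y, z)x` and
`(x, y, zx) = x(x, y, z)`, both obtained from the Teichmüller identity (`associator_cocycle`),
subtract to `(x, y, [x, z]) = [(x, y, z), x]`. This applies to Zorn's vector matrices, which are
alternative by the dot and cross product rules in `R³`, and `M₇` is their trace-zero part: the
table of `m7mul` is the commutator
`[(a, u, v), (b, s, t)] = (u·t - v·s, 2(as - bu - v×t), 2(bv - at + u×s))`.
-/

theorem map_malJac {A B G : Type*} [Add A] [Add B] [FunLike G A B] [AddHomClass G A B]
    {mulA : A → A → A} {mulB : B → B → B} (φ : G)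
    (hφ_mul : ∀ x y, φ (mulA x y) = mulB (φ x) (φ y)) (x y z : A) :
    φ (malJac mulA x y z) = malJac mulB (φ x) (φ y) (φ z) := by
  simp only [malJac, map_add, hφ_mul]

theorem IsMalcevFun.of_injective {A B : Type*} [AddCommGroup A] [AddCommGroup B]
    {mulA : A → A → A} {mulB : B → B → B}
    (hB : IsMalcevFun mulB) (φ : A →+ B) (hφ : Function.Injective φ)
    (hφ_mul : ∀ x y, φ (mulA x y) = mulB (φ x) (φ y)) : IsMalcevFun mulA := by
  refine ⟨fun x ↦ hφ ?_, fun x y z ↦ hφ ?_⟩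
  · rw [hφ_mul, hB.1, map_zero]
  · rw [map_malJac φ hφ_mul, hφ_mul, hφ_mul, map_malJac φ hφ_mul, hB.2]

section Associator

variable {A : Type*} [NonUnitalNonAssocRing A]

theorem associator_sub_right (x y z w : A) :
    associator x y (z - w) = associator x y z - associator x y w := by
  simp only [← AddMonoidHom.associator_apply, map_sub]

theorem malJac_lie_eq_associator (x y z : A) :
    malJac (fun a b : A ↦ ⁅a, b⁆) x y z =
      associator x y z + associator y z x + associator z x y
        - associator y x z - associator x z y - associator z y x := by
  simp only [malJac, Ring.lie_def, associator, sub_mul, mul_sub]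
  abel

end Associator

/-- Alternative (not necessarily unital) rings: both alternative laws `(xx)y = x(xy)` and
`(xy)y = x(yy)` hold, expressed as the vanishing of associators. -/
class IsAlternative (A : Type*) [NonUnitalNonAssocRing A] : Prop where
  associator_self_left (x y : A) : associator x x y = 0
  associator_self_right (x y : A) : associator x y y = 0

namespace IsAlternative

variable {A : Type*} [NonUnitalNonAssocRing A] [IsAlternative A]

theorem associator_swap_left (x y z : A) : associator y x z = -associator x y z := by
  have h := associator_self_left (x + y) z
  simp only [← AddMonoidHom.associator_apply, map_add, AddMonoidHom.add_apply] at h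
  simp only [AddMonoidHom.associator_apply, associator_self_left, zero_add, add_zero] at h
  exact eq_neg_of_add_eq_zero_left h

theorem associator_swap_right (x y z : A) : associator x z y = -associator x y z := by
  have h := associator_self_right x (y + z)
  simp only [← AddMonoidHom.associator_apply, map_add, AddMonoidHom.add_apply] at h
  simp only [AddMonoidHom.associator_apply, associator_self_right, zero_add, add_zero] at h
  exact eq_neg_of_add_eq_zero_left h

theorem associator_rotate (x y z : A) : associator y z x = associator x y z := by
  rw [associator_swap_right, associator_swap_left, neg_neg]

theorem associator_reverse (x y z : A) : associator z y x = -associator x y z := by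
  rw [associator_swap_left, associator_rotate]

theorem malJac_lie (x y z : A) : malJac (fun a b : A ↦ ⁅a, b⁆) x y z = 6 • associator x y z := by
  rw [malJac_lie_eq_associator, ← associator_rotate z x y, associator_rotate x y z,
    associator_swap_left x y z, associator_swap_right x y z, associator_reverse x y z]
  abel

theorem associator_mul_self_left (x y z : A) :
    associator (x * x) y z = associator x y (x * z) + associator x (y * x) z := by
  have h := associator_cocycle y x x z
  rw [associator_self_left, associator_self_right, mul_zero, zero_mul,
    associator_swap_left x (y * x), associator_swap_left (x * x) y,
    associator_swap_left x y] at h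
  rw [eq_comm, ← sub_eq_zero, ← h]
  abel

theorem associator_mul_left_right (x y z : A) :
    associator x y (x * z) = associator x y z * x := by
  have h := associator_cocycle z y x x
  rw [associator_self_right, associator_self_right, mul_zero, associator_reverse x (y * x),
    associator_reverse (x * x) y, associator_reverse x y, associator_mul_self_left, neg_mul] at h
  rw [← sub_eq_zero, ← h]
  abel

theorem associator_mul_right_right (x y z : A) :
    associator x y (z * x) = x * associator x y z := by
  have h := associator_cocycle x x y z
  rw [associator_self_left, associator_self_left, zero_mul, associator_swap_right (x * x) z y,
    associator_mul_self_left x z y, associator_swap_right x (x * y) z,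
    associator_swap_right x y (z * x)] at h
  rw [eq_comm, ← sub_eq_zero, ← h]
  abel

theorem associator_lie_right (x y z : A) :
    associator x y ⁅x, z⁆ = ⁅associator x y z, x⁆ := by
  rw [Ring.lie_def, Ring.lie_def, associator_sub_right, associator_mul_left_right,
    associator_mul_right_right]

variable (A) in
theorem isMalcevFun_lie : IsMalcevFun (fun x y : A ↦ ⁅x, y⁆) := by
  refine ⟨fun x ↦ sub_self (x * x), fun x y z ↦ ?_⟩
  simp only [malJac_lie, associator_lie_right]
  rw [Ring.lie_def, Ring.lie_def, smul_mul_assoc, mul_smul_comm, smul_sub]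

end IsAlternative

/-- Zorn's vector matrices over `R`, the split octonion algebra: `2 × 2` matrices with scalars on
the diagonal and vectors of `R³` off the diagonal. -/
@[ext]
structure ZornMatrix (R : Type*) where
  topLeft : R
  topRight : Fin 3 → R
  botLeft : Fin 3 → R
  botRight : R

namespace ZornMatrix

open Matrix

variable {R : Type*}

variable (R) in
/-- The entries of a vector matrix, as an equivalence along which the additive group structure of
the product is transported. -/
def equivProd : ZornMatrix R ≃ R × (Fin 3 → R) × (Fin 3 → R) × R where
  toFun x := (x.topLeft, x.topRight, x.botLeft, x.botRight)
  invFun p := ⟨p.1, p.2.1, p.2.2.1, p.2.2.2⟩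

variable [CommRing R]

instance : AddCommGroup (ZornMatrix R) := (equivProd R).addCommGroup

@[simp] theorem topLeft_zero : (0 : ZornMatrix R).topLeft = 0 := rfl
@[simp] theorem topRight_zero : (0 : ZornMatrix R).topRight = 0 := rfl
@[simp] theorem botLeft_zero : (0 : ZornMatrix R).botLeft = 0 := rfl
@[simp] theorem botRight_zero : (0 : ZornMatrix R).botRight = 0 := rfl

variable (x y : ZornMatrix R)

@[simp] theorem topLeft_add : (x + y).topLeft = x.topLeft + y.topLeft := rfl
@[simp] theorem topRight_add : (x + y).topRight = x.topRight + y.topRight := rfl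
@[simp] theorem botLeft_add : (x + y).botLeft = x.botLeft + y.botLeft := rfl
@[simp] theorem botRight_add : (x + y).botRight = x.botRight + y.botRight := rfl

@[simp] theorem topLeft_sub : (x - y).topLeft = x.topLeft - y.topLeft := rfl
@[simp] theorem topRight_sub : (x - y).topRight = x.topRight - y.topRight := rfl
@[simp] theorem botLeft_sub : (x - y).botLeft = x.botLeft - y.botLeft := rfl
@[simp] theorem botRight_sub : (x - y).botRight = x.botRight - y.botRight := rfl

instance : Mul (ZornMatrix R) where
  mul x y :=
    { topLeft := x.topLeft * y.topLeft + x.topRight ⬝ᵥ y.botLeft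
      topRight := x.topLeft • y.topRight + y.botRight • x.topRight - x.botLeft ⨯₃ y.botLeft
      botLeft := y.topLeft • x.botLeft + x.botRight • y.botLeft + x.topRight ⨯₃ y.topRight
      botRight := x.botRight * y.botRight + x.botLeft ⬝ᵥ y.topRight }

@[simp] theorem topLeft_mul :
    (x * y).topLeft = x.topLeft * y.topLeft + x.topRight ⬝ᵥ y.botLeft := rfl

@[simp] theorem topRight_mul :
    (x * y).topRight =
      x.topLeft • y.topRight + y.botRight • x.topRight - x.botLeft ⨯₃ y.botLeft := rfl

@[simp] theorem botLeft_mul :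
    (x * y).botLeft =
      y.topLeft • x.botLeft + x.botRight • y.botLeft + x.topRight ⨯₃ y.topRight := rfl

@[simp] theorem botRight_mul :
    (x * y).botRight = x.botRight * y.botRight + x.botLeft ⬝ᵥ y.topRight := rfl

instance : NonUnitalNonAssocRing (ZornMatrix R) where
  left_distrib x y z := by
    ext1 <;> simp [mul_add, smul_add, add_smul] <;> abel
  right_distrib x y z := by
    ext1 <;> simp [add_mul, smul_add, add_smul] <;> abel
  zero_mul x := by ext1 <;> simp
  mul_zero x := by ext1 <;> simp

theorem associator_self_left : associator x x y = 0 := by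
  rw [associator, sub_eq_zero]
  ext1
  · simp only [topLeft_mul, topRight_mul, botLeft_mul, cross_self, add_dotProduct, sub_zero,
      smul_dotProduct, dotProduct_add, dotProduct_smul, dot_self_cross, smul_eq_mul]
    ring
  · simp only [topLeft_mul, topRight_mul, botLeft_mul, botRight_mul, cross_self, map_add, map_smul,
      LinearMap.add_apply, LinearMap.smul_apply, add_zero, cross_cross_eq_smul_sub_smul',
      dotProduct_comm x.botLeft]
    module
  · simp only [topLeft_mul, topRight_mul, botLeft_mul, botRight_mul, cross_self, map_add, map_sub,
      map_smul, LinearMap.add_apply, LinearMap.smul_apply, sub_zero,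
      cross_cross_eq_smul_sub_smul', dotProduct_comm x.botLeft]
    module
  · simp only [topRight_mul, botLeft_mul, botRight_mul, cross_self, add_dotProduct, add_zero,
      smul_dotProduct, dotProduct_add, dotProduct_sub, dotProduct_smul, dot_self_cross,
      smul_eq_mul]
    ring

theorem associator_self_right : associator x y y = 0 := by
  have cross_dot_self (v w : Fin 3 → R) : v ⨯₃ w ⬝ᵥ w = 0 := by
    rw [dotProduct_comm, dot_cross_self]
  rw [associator, sub_eq_zero]
  ext1
  · simp only [topLeft_mul, topRight_mul, botLeft_mul, cross_self, add_dotProduct, sub_dotProduct,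
      smul_dotProduct, dotProduct_add, dotProduct_smul, cross_dot_self, add_zero, smul_eq_mul]
    ring
  · simp only [topLeft_mul, topRight_mul, botLeft_mul, botRight_mul, cross_self, map_add, map_smul,
      LinearMap.add_apply, LinearMap.smul_apply, add_zero, cross_cross_eq_smul_sub_smul,
      dotProduct_comm y.botLeft]
    module
  · simp only [topLeft_mul, topRight_mul, botLeft_mul, botRight_mul, cross_self, map_add, map_sub,
      map_smul, LinearMap.add_apply, LinearMap.sub_apply, LinearMap.smul_apply, sub_zero,
      cross_cross_eq_smul_sub_smul, dotProduct_comm y.botLeft]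
    module
  · simp only [topRight_mul, botLeft_mul, botRight_mul, cross_self, add_dotProduct, sub_zero,
      smul_dotProduct, dotProduct_add, dotProduct_smul, cross_dot_self, smul_eq_mul]
    ring

instance : IsAlternative (ZornMatrix R) where
  associator_self_left := associator_self_left
  associator_self_right := associator_self_right

theorem lie_mk_neg_mk_neg (a b : R) (u v s t : Fin 3 → R) :
    ⁅(⟨a, u, v, -a⟩ : ZornMatrix R), (⟨b, s, t, -b⟩ : ZornMatrix R)⁆ =
      ⟨u ⬝ᵥ t - v ⬝ᵥ s, (2 : R) • (a • s - b • u - v ⨯₃ t),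
        (2 : R) • (b • v - a • t + u ⨯₃ s), -(u ⬝ᵥ t - v ⬝ᵥ s)⟩ := by
  rw [Ring.lie_def]
  ext1
  · simp only [topLeft_sub, topLeft_mul, dotProduct_comm s]
    ring
  · simp only [topRight_sub, topRight_mul, ← cross_anticomm v t]
    module
  · simp only [botLeft_sub, botLeft_mul, ← cross_anticomm u s]
    module
  · simp only [botRight_sub, botRight_mul, dotProduct_comm t]
    ring

end ZornMatrix

/-- The embedding of `M₇` as the trace-zero vector matrices: `e₁` is `diag(1, -1)`, while
`e₂, e₃, e₄` and `e₅, e₆, e₇` are the standard bases of the two off-diagonal copies of `R³`. -/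
def m7ToZornMatrix (R : Type*) [CommRing R] : (Fin 7 → R) →+ ZornMatrix R :=
  AddMonoidHom.mk' (fun a ↦ ⟨a 0, ![a 1, a 2, a 3], ![a 4, a 5, a 6], -a 0⟩) fun a b ↦ by
    ext1 <;> simp [add_comm]

theorem m7ToZornMatrix_apply {R : Type*} [CommRing R] (a : Fin 7 → R) :
    m7ToZornMatrix R a = ⟨a 0, ![a 1, a 2, a 3], ![a 4, a 5, a 6], -a 0⟩ :=
  rfl

theorem m7ToZornMatrix_injective (R : Type*) [CommRing R] :
    Function.Injective (m7ToZornMatrix R) := by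
  refine Function.LeftInverse.injective (g := fun x ↦ ![x.topLeft, x.topRight 0, x.topRight 1,
    x.topRight 2, x.botLeft 0, x.botLeft 1, x.botLeft 2]) fun a ↦ ?_
  ext i
  fin_cases i <;> rfl

theorem m7ToZornMatrix_m7mul {F : Type*} [Field F] (a b : Fin 7 → F) :
    m7ToZornMatrix F (m7mul a b) = ⁅m7ToZornMatrix F a, m7ToZornMatrix F b⁆ := by
  simp only [m7ToZornMatrix_apply, ZornMatrix.lie_mk_neg_mk_neg, cross_apply,
    Matrix.vec3_dotProduct, Matrix.smul_vec3, m7mul, Matrix.cons_val]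
  ext i
  · dsimp only
    ring
  · fin_cases i <;> simp <;> ring
  · fin_cases i <;> simp <;> ring
  · dsimp only
    ring

theorem stmt8_M7_is_malcev_general {F : Type*} [Field F] :
    IsMalcevFun (fun a b : Fin 7 → F => m7mul a b) :=
  (IsAlternative.isMalcevFun_lie (ZornMatrix F)).of_injective (m7ToZornMatrix F)
    (m7ToZornMatrix_injective F) m7ToZornMatrix_m7mul

/-- `M₇(F)` is a Malcev algebra. -/
theorem stmt8_M7_is_malcev
    {F : Type*} [Field F] (h2 : (2 : F) ≠ 0) (h3 : (3 : F) ≠ 0) :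
    IsMalcevFun (fun a b : Fin 7 → F => m7mul a b) :=
  stmt8_M7_is_malcev_general
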